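/- Let Γ be a finite simplicial graph and H_Φ a generalized Bestvina–Brady subgroup of A_Γ. If H_Φ is strong (each basis subgraph is connected and strongly dominating), then the distortion of H_Φ in A_Γ is at most quadratic, i.e. Dist_{A_Γ}^{H_Φ} ⪯ n². If moreover H_Φ is special (each basis subgraph is connected and specially dominating), then the distortion of H_Φ in A_Γ is linear, i.e. Dist_{A_Γ}^{H_Φ} ∼ n. -/

import Mathlib

/-- The word length of `g` with respect to a set `S` of letters. -/
noncomputable def wordLength {G : Type*} [Group G] (S : Set G) (g : G) : ℕ :=
  sInf {n | ∃ l : List G, l.length = n ∧ (∀ x ∈ l, x ∈ S ∨ x⁻¹ ∈ S) ∧ l.prod = g}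

/-- The distortion function: `Dist(r) = max { |h|_T : h ∈ H, |h|_S ≤ r }`. -/
noncomputable def distortion {G : Type*} [Group G] (S T : Set G) (H : Subgroup G)
    (r : ℕ) : ℕ :=
  sSup {n | ∃ h ∈ H, wordLength S h ≤ r ∧ wordLength T h = n}

/-- `f ⪯ g`. -/
def Dominated (f g : ℕ → ℕ) : Prop :=
  ∃ A B C D : ℕ, 0 < A ∧ 0 < B ∧ 0 < C ∧ ∀ x : ℕ, D < x → f x ≤ A * g (B * x) + C * x

/-- `f ∼ g`. -/
def FEquiv (f g : ℕ → ℕ) : Prop := Dominated f g ∧ Dominated g f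

/-- The defining relators of the right-angled Artin group of a graph `Γ`. -/
def raagRels {V : Type*} (Γ : SimpleGraph V) : Set (FreeGroup V) :=
  {r | ∃ u v : V, Γ.Adj u v ∧
    r = FreeGroup.of u * FreeGroup.of v * (FreeGroup.of u)⁻¹ * (FreeGroup.of v)⁻¹}

/-- The right-angled Artin group of a graph `Γ`. -/
abbrev RAAG {V : Type*} (Γ : SimpleGraph V) : Type _ := PresentedGroup (raagRels Γ)

/-- The standard generator of `RAAG Γ` associated to a vertex. -/
def raagGen {V : Type*} (Γ : SimpleGraph V) (v : V) : RAAG Γ := PresentedGroup.of v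

/-!
Choose a dominating vertex `u i` for each label and let `σ q = ∏ i, (u i) ^ (q i)`, a section of
`Φ`. Along a word `s₁ ⋯ sₙ` representing an element of `ker Φ`, the Schreier factors
`σ(Φ(s₁ ⋯ sₖ₋₁)) sₖ σ(Φ(s₁ ⋯ sₖ))⁻¹` lie in `ker Φ` and multiply to the element, so it suffices
to bound the length of each. For `sₖ` a vertex `v` with label `i` the factor is the conjugate of
`v (u i)⁻¹` by `σ q`. In the special case every `u i` is central, and the factor is one of the
finitely many elements `v (u i)⁻¹`, of bounded length. In the strong case every `u j` with
`j ≠ i` commutes with `v` and `u i`, so only the power `(u i) ^ a`, `a = q i`, matters, and the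
factor is the quotient of `(u i) ^ a v ^ (-a)` by `(u i) ^ (a + 1) v ^ (-(a + 1))`. Along an edge
`v w` one has `v ^ a w ^ (-a) = (v w⁻¹) ^ a`, so a path from `u i` to `v` in the basis subgraph
shows that both have length linear in `a`, hence in `n`.
-/

section WordBall

open scoped Pointwise

variable {G : Type*} [Group G] {S T : Set G} {g h : G} {m n : ℕ}

/-- The ball of radius `n` in the word metric of `S`. Unlike `wordLength`, which is `0` outside
`Subgroup.closure S`, it needs no membership hypotheses to be multiplicative. -/
def wordBall (S : Set G) (n : ℕ) : Set G :=
  insert 1 (S ∪ S⁻¹) ^ n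

theorem one_mem_wordBall (S : Set G) (n : ℕ) : (1 : G) ∈ wordBall S n :=
  Set.one_mem_pow (Set.mem_insert _ _)

theorem wordBall_mono (S : Set G) : Monotone (wordBall S) :=
  fun _ _ hmn => Set.pow_subset_pow_right (Set.mem_insert _ _) hmn

theorem mul_mem_wordBall_add (hg : g ∈ wordBall S m) (hh : h ∈ wordBall S n) :
    g * h ∈ wordBall S (m + n) := by
  rw [wordBall, pow_add]
  exact Set.mul_mem_mul hg hh

theorem inv_mem_wordBall (hg : g ∈ wordBall S n) : g⁻¹ ∈ wordBall S n := by
  have symm : (insert 1 (S ∪ S⁻¹))⁻¹ = insert 1 (S ∪ S⁻¹) := by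
    rw [Set.inv_insert, Set.union_inv, inv_inv, inv_one, Set.union_comm]
  rw [wordBall, ← symm, inv_pow]
  exact Set.inv_mem_inv.2 hg

theorem pow_mem_wordBall_mul (hg : g ∈ wordBall S m) (k : ℕ) : g ^ k ∈ wordBall S (m * k) := by
  rw [wordBall, pow_mul]
  exact Set.pow_mem_pow hg

theorem zpow_mem_wordBall_mul_natAbs (hg : g ∈ wordBall S m) (k : ℤ) :
    g ^ k ∈ wordBall S (m * k.natAbs) := by
  cases k with
  | ofNat k => simpa only [Int.ofNat_eq_natCast, zpow_natCast, Int.natAbs_natCast] using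
      pow_mem_wordBall_mul hg k
  | negSucc k =>
    rw [zpow_negSucc]
    exact inv_mem_wordBall (pow_mem_wordBall_mul hg (k + 1))

theorem mem_wordBall_succ_iff :
    g ∈ wordBall S (n + 1) ↔
      ∃ w ∈ wordBall S n, ∃ s, (s = 1 ∨ s ∈ S ∨ s⁻¹ ∈ S) ∧ w * s = g := by
  rw [wordBall, pow_succ, Set.mem_mul]
  rfl

theorem list_prod_mem_wordBall_length {l : List G} (hl : ∀ s ∈ l, s ∈ S ∨ s⁻¹ ∈ S) :
    l.prod ∈ wordBall S l.length := by
  induction l using List.reverseRecOn with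
  | nil => exact one_mem_wordBall S 0
  | append_singleton l s ih =>
    rw [List.prod_append, List.prod_singleton, List.length_append, List.length_singleton]
    exact mem_wordBall_succ_iff.2
      ⟨_, ih fun t ht => hl t (List.mem_append_left _ ht), s, .inr (hl s (by simp)), rfl⟩

theorem exists_list_of_mem_wordBall (hg : g ∈ wordBall S n) :
    ∃ l : List G, l.length ≤ n ∧ (∀ s ∈ l, s ∈ S ∨ s⁻¹ ∈ S) ∧ l.prod = g := by
  induction n generalizing g with
  | zero => exact ⟨[], by simp, by simp, (Set.mem_one.1 hg).symm⟩
  | succ n ih =>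
    obtain ⟨w, hw, s, hs, rfl⟩ := mem_wordBall_succ_iff.1 hg
    obtain ⟨l, hln, hlS, rfl⟩ := ih hw
    rcases hs with rfl | hs
    · exact ⟨l, hln.trans n.le_succ, hlS, (mul_one _).symm⟩
    · refine ⟨l ++ [s], by simpa using hln, fun t ht => ?_, by simp⟩
      rcases List.mem_append.1 ht with ht | ht
      · exact hlS t ht
      · rwa [List.mem_singleton.1 ht]

theorem wordLength_le_of_mem_wordBall (hg : g ∈ wordBall S n) : wordLength S g ≤ n := by
  obtain ⟨l, hln, hlS, hlg⟩ := exists_list_of_mem_wordBall hg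
  exact le_trans (Nat.sInf_le ⟨l, rfl, hlS, hlg⟩) hln

theorem mem_wordBall_wordLength (hg : g ∈ Subgroup.closure S) :
    g ∈ wordBall S (wordLength S g) := by
  obtain ⟨l, hlS, hlg⟩ : ∃ l : List G, (∀ s ∈ l, s ∈ S ∨ s⁻¹ ∈ S) ∧ l.prod = g := by
    rw [← Subgroup.mem_toSubmonoid, Subgroup.closure_toSubmonoid] at hg
    exact Submonoid.exists_list_of_mem_closure hg
  obtain ⟨l', hlen, hl'S, hl'g⟩ := Nat.sInf_mem
    (s := {n | ∃ l : List G, l.length = n ∧ (∀ s ∈ l, s ∈ S ∨ s⁻¹ ∈ S) ∧ l.prod = g})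
    ⟨l.length, l, rfl, hlS, hlg⟩
  have hl'_mem := list_prod_mem_wordBall_length hl'S
  rwa [hl'g, hlen] at hl'_mem

theorem natAbs_toAdd_le_of_mem_wordBall (ψ : G →* Multiplicative ℤ) {k : ℕ}
    (hψ : ∀ s ∈ S, (ψ s).toAdd.natAbs ≤ k) (hg : g ∈ wordBall S n) :
    (ψ g).toAdd.natAbs ≤ n * k := by
  induction n generalizing g with
  | zero => simp [Set.mem_one.1 hg]
  | succ n ih =>
    obtain ⟨w, hw, s, hs, rfl⟩ := mem_wordBall_succ_iff.1 hg
    have letter_le : (ψ s).toAdd.natAbs ≤ k := by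
      rcases hs with rfl | hs | hs
      · simp
      · exact hψ s hs
      · simpa using hψ s⁻¹ hs
    rw [map_mul, toAdd_mul, Nat.succ_mul]
    exact (Int.natAbs_add_le _ _).trans (Nat.add_le_add (ih hw) letter_le)

theorem mul_inv_mem_wordBall_of_factor_mem {c : G → G} {M N : ℕ} (c_one : c 1 = 1)
    (factor_mem : ∀ w ∈ wordBall S N, ∀ s ∈ S, c w * s * (c (w * s))⁻¹ ∈ wordBall T M)
    (hn : n ≤ N) (hg : g ∈ wordBall S n) : g * (c g)⁻¹ ∈ wordBall T (n * M) := by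
  induction n generalizing g with
  | zero => simpa [Set.mem_one.1 hg, c_one] using one_mem_wordBall T (0 * M)
  | succ n ih =>
    have hgN : g ∈ wordBall S N := wordBall_mono S hn hg
    obtain ⟨w, hw, s, hs, rfl⟩ := mem_wordBall_succ_iff.1 hg
    have hwN : w ∈ wordBall S N := wordBall_mono S (n.le_succ.trans hn) hw
    have letter_mem : c w * s * (c (w * s))⁻¹ ∈ wordBall T M := by
      rcases hs with rfl | hs | hs
      · simpa using one_mem_wordBall T M
      · exact factor_mem w hwN s hs
      · simpa [mul_assoc] using inv_mem_wordBall (factor_mem (w * s) hgN s⁻¹ hs)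
    have factorization : w * s * (c (w * s))⁻¹ = w * (c w)⁻¹ * (c w * s * (c (w * s))⁻¹) := by
      group
    rw [factorization, Nat.succ_mul]
    exact mul_mem_wordBall_add (ih (n.le_succ.trans hn) hw) letter_mem

theorem distortion_le_mul_of_factor_mem {H : Subgroup G} {c : G → G} {M N : ℕ}
    (hHS : H ≤ Subgroup.closure S) (hc : ∀ h ∈ H, c h = 1)
    (factor_mem : ∀ w ∈ wordBall S N, ∀ s ∈ S, c w * s * (c (w * s))⁻¹ ∈ wordBall T M) :
    distortion S T H N ≤ N * M := by
  apply csSup_le'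
  rintro _ ⟨h, hH, hhN, rfl⟩
  have h_mem : h ∈ wordBall S N := wordBall_mono S hhN (mem_wordBall_wordLength (hHS hH))
  have := mul_inv_mem_wordBall_of_factor_mem (hc 1 H.one_mem) factor_mem le_rfl h_mem
  rw [hc h hH, inv_one, mul_one] at this
  exact wordLength_le_of_mem_wordBall this

theorem exists_zpow_mul_inv_mem_wordBall_of_reachable {V : Type*} {Γ : SimpleGraph V} {x : V → G}
    (comm : ∀ v w, Γ.Adj v w → Commute (x v) (x w))
    (mem : ∀ v w, Γ.Adj v w → x v * (x w)⁻¹ ∈ Subgroup.closure T) {v w : V}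
    (hvw : Γ.Reachable v w) :
    ∃ m : ℕ, ∀ a : ℤ, x v ^ a * (x w ^ a)⁻¹ ∈ wordBall T (m * a.natAbs) := by
  obtain ⟨p⟩ := hvw
  induction p with
  | nil => exact ⟨0, fun a => by simpa using one_mem_wordBall T _⟩
  | @cons u v w huv _ ih =>
    obtain ⟨m, hm⟩ := ih
    refine ⟨wordLength T (x u * (x v)⁻¹) + m, fun a => ?_⟩
    have edge_mem :
        x u ^ a * (x v ^ a)⁻¹ ∈ wordBall T (wordLength T (x u * (x v)⁻¹) * a.natAbs) := by
      rw [← inv_zpow, ← (comm u v huv).inv_right.mul_zpow]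
      exact zpow_mem_wordBall_mul_natAbs (mem_wordBall_wordLength (mem u v huv)) a
    simpa [add_mul, mul_assoc] using mul_mem_wordBall_add edge_mem (hm a)

end WordBall

theorem zpow_conj_mul_inv_eq {G : Type*} [Group G] (g h : G) (a : ℤ) :
    h ^ a * (g * h⁻¹) * (h ^ a)⁻¹ =
      h ^ a * (g ^ a)⁻¹ * (h ^ (a + 1) * (g ^ (a + 1))⁻¹)⁻¹ := by
  group

section PiZPowersHom

variable {ι G : Type*} [Group G] {y : ι → G}

theorem pairwise_commute_zpowersHom (hy : Pairwise fun i j => Commute (y i) (y j)) :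
    Pairwise fun i j => ∀ a b, Commute (zpowersHom G (y i) a) (zpowersHom G (y j) b) :=
  fun _ _ hij _ _ => (hy hij).zpow_zpow _ _

variable [Fintype ι]

/-- The homomorphism `q ↦ ∏ i, y i ^ q i` defined by a commuting family `y`. Applied to one
dominating vertex per label it is the section `σ` of `Φ`. -/
def piZPowersHom (y : ι → G) (hy : Pairwise fun i j => Commute (y i) (y j)) :
    (ι → Multiplicative ℤ) →* G :=
  MonoidHom.noncommPiCoprod (fun i => zpowersHom G (y i)) (pairwise_commute_zpowersHom hy)

variable (hy : Pairwise fun i j => Commute (y i) (y j))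

theorem piZPowersHom_mulSingle [DecidableEq ι] (i : ι) (a : Multiplicative ℤ) :
    piZPowersHom y hy (Pi.mulSingle i a) = y i ^ a.toAdd :=
  MonoidHom.noncommPiCoprod_mulSingle (fun i => zpowersHom G (y i)) i a

theorem commute_piZPowersHom {g : G} {q : ι → Multiplicative ℤ}
    (h : ∀ i, Commute g (y i ^ (q i).toAdd)) : Commute g (piZPowersHom y hy q) := by
  rw [piZPowersHom, MonoidHom.noncommPiCoprod_apply]
  exact Finset.noncommProd_commute _ _ _ _ fun i _ => h i

theorem piZPowersHom_conj_eq_zpow_conj {g : G} {i : ι} (h : ∀ j ≠ i, Commute g (y j))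
    (q : ι → Multiplicative ℤ) :
    piZPowersHom y hy q * g * (piZPowersHom y hy q)⁻¹ =
      y i ^ (q i).toAdd * g * (y i ^ (q i).toAdd)⁻¹ := by
  classical
  set r := (Pi.mulSingle i (q i))⁻¹ * q with hr
  have hrg : Commute g (piZPowersHom y hy r) := by
    refine commute_piZPowersHom hy fun j => ?_
    by_cases hj : j = i
    · subst hj
      simp [hr]
    · exact (h j hj).zpow_right _
  have hq : piZPowersHom y hy q = y i ^ (q i).toAdd * piZPowersHom y hy r := by
    rw [← piZPowersHom_mulSingle hy, ← map_mul, hr, mul_inv_cancel_left]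
  rw [hq, mul_assoc (y i ^ _), ← hrg.eq]
  group

end PiZPowersHom

section Dominated

variable {f g : ℕ → ℕ}

theorem dominated_of_le_mul_add_mul {a c : ℕ} (h : ∀ n, f n ≤ a * g n + c * n) :
    Dominated f g := by
  refine ⟨a + 1, 1, c + 1, 0, a.succ_pos, one_pos, c.succ_pos, fun n _ => (h n).trans ?_⟩
  rw [one_mul]
  gcongr <;> exact Nat.le_succ _

theorem id_dominated (f : ℕ → ℕ) : Dominated (fun n => n) f :=
  dominated_of_le_mul_add_mul (a := 0) (c := 1) fun n => by simp

end Dominated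

section Labeling

variable {V ι : Type*}

/-- The condition on a labeling that makes its generalized Bestvina–Brady subgroup strong: every
basis subgraph is connected and strongly dominating. -/
def IsStrongLabeling (Γ : SimpleGraph V) (lab : V → ι) : Prop :=
  ∀ i, (Γ.induce {v | lab v = i}).Connected ∧ ∃ u, lab u = i ∧ ∀ v, lab v ≠ i → Γ.Adj u v

/-- The condition on a labeling that makes its generalized Bestvina–Brady subgroup special: every
basis subgraph is specially dominating. Connectedness is not listed, since each basis subgraph then
contains a vertex adjacent to all its others. -/
def IsSpecialLabeling (Γ : SimpleGraph V) (lab : V → ι) : Prop :=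
  ∀ i, ∃ u, lab u = i ∧ ∀ v, v ≠ u → Γ.Adj u v

theorem IsStrongLabeling.surjective {Γ : SimpleGraph V} {lab : V → ι}
    (h : IsStrongLabeling Γ lab) : Function.Surjective lab :=
  fun i => let ⟨u, hu, _⟩ := (h i).2; ⟨u, hu⟩

theorem IsSpecialLabeling.surjective {Γ : SimpleGraph V} {lab : V → ι}
    (h : IsSpecialLabeling Γ lab) : Function.Surjective lab :=
  fun i => let ⟨u, hu, _⟩ := h i; ⟨u, hu⟩

variable [DecidableEq ι] {G : Type*} [Group G] {Γ : SimpleGraph V} {x : V → G} {lab : V → ι}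
  {Φ : G →* (ι → Multiplicative ℤ)} {T : Set G}

theorem mul_inv_mem_ker_of_label_eq
    (hΦ : ∀ v, Φ (x v) = Pi.mulSingle (lab v) (Multiplicative.ofAdd 1)) {v w : V}
    (h : lab v = lab w) : x v * (x w)⁻¹ ∈ Φ.ker := by
  rw [MonoidHom.mem_ker, map_mul, map_inv, hΦ, hΦ, h, mul_inv_cancel]

theorem natAbs_toAdd_label_le
    (hΦ : ∀ v, Φ (x v) = Pi.mulSingle (lab v) (Multiplicative.ofAdd 1)) {n : ℕ} {g : G}
    (hg : g ∈ wordBall (Set.range x) n) (i : ι) : (Φ g i).toAdd.natAbs ≤ n := by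
  have gen_le : ∀ s ∈ Set.range x, (Φ s i).toAdd.natAbs ≤ 1 := by
    rintro _ ⟨v, rfl⟩
    rw [hΦ, Pi.mulSingle_apply]
    split_ifs <;> simp
  simpa using natAbs_toAdd_le_of_mem_wordBall
    ((Pi.evalMonoidHom (fun _ => Multiplicative ℤ) i).comp Φ) gen_le hg

theorem distortion_ker_le_of_conj_mem [Fintype ι] (gen : Subgroup.closure (Set.range x) = ⊤)
    (hΦ : ∀ v, Φ (x v) = Pi.mulSingle (lab v) (Multiplicative.ofAdd 1)) {y : ι → G}
    (hy : Pairwise fun i j => Commute (y i) (y j)) {M N : ℕ}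
    (conj_mem : ∀ v, ∀ q : ι → Multiplicative ℤ, (∀ i, (q i).toAdd.natAbs ≤ N) →
      piZPowersHom y hy q * (x v * (y (lab v))⁻¹) * (piZPowersHom y hy q)⁻¹ ∈ wordBall T M) :
    distortion (Set.range x) T Φ.ker N ≤ N * M := by
  refine distortion_le_mul_of_factor_mem (c := fun g => piZPowersHom y hy (Φ g))
    (gen ▸ le_top) (fun h hh => by rw [MonoidHom.mem_ker.1 hh, map_one]) ?_
  rintro w hw _ ⟨v, rfl⟩
  simpa [hΦ, piZPowersHom_mulSingle, mul_assoc] using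
    conj_mem v (Φ w) (natAbs_toAdd_label_le hΦ hw)

variable [Finite V]

theorem IsSpecialLabeling.exists_distortion_ker_le_mul
    (special : IsSpecialLabeling Γ lab) (comm : ∀ v w, Γ.Adj v w → Commute (x v) (x w))
    (gen : Subgroup.closure (Set.range x) = ⊤)
    (hΦ : ∀ v, Φ (x v) = Pi.mulSingle (lab v) (Multiplicative.ofAdd 1))
    (hT : Φ.ker ≤ Subgroup.closure T) :
    ∃ K, ∀ N, distortion (Set.range x) T Φ.ker N ≤ N * K := by
  have := Finite.of_surjective lab special.surjective
  cases nonempty_fintype ι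
  choose u hu adj using special
  have central (i : ι) (v : V) : Commute (x v) (x (u i)) := by
    by_cases h : v = u i
    · rw [h]
    · exact (comm _ _ (adj i v h)).symm
  obtain ⟨K, hK⟩ := (Set.finite_range fun v => wordLength T (x v * (x (u (lab v)))⁻¹)).bddAbove
  have hy : Pairwise fun i j => Commute (x (u i)) (x (u j)) := fun i j _ => central j (u i)
  refine ⟨K, fun N => distortion_ker_le_of_conj_mem gen hΦ hy fun v q _ => ?_⟩
  have comm_section : Commute (x v * (x (u (lab v)))⁻¹) (piZPowersHom _ hy q) :=
    commute_piZPowersHom hy fun i =>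
      ((central i v).mul_left (central i _).inv_left).zpow_right _
  rw [← comm_section.eq, mul_inv_cancel_right]
  exact wordBall_mono T (hK ⟨v, rfl⟩) <|
    mem_wordBall_wordLength (hT (mul_inv_mem_ker_of_label_eq hΦ (hu _).symm))

theorem IsStrongLabeling.exists_distortion_ker_le_mul
    (strong : IsStrongLabeling Γ lab) (comm : ∀ v w, Γ.Adj v w → Commute (x v) (x w))
    (gen : Subgroup.closure (Set.range x) = ⊤)
    (hΦ : ∀ v, Φ (x v) = Pi.mulSingle (lab v) (Multiplicative.ofAdd 1))
    (hT : Φ.ker ≤ Subgroup.closure T) :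
    ∃ K, ∀ N, distortion (Set.range x) T Φ.ker N ≤ N * (K * (2 * N + 1)) := by
  have := Finite.of_surjective lab strong.surjective
  cases nonempty_fintype ι
  choose connected u hu adj using strong
  have comm_of_label_ne {i : ι} {v : V} (h : lab v ≠ i) : Commute (x v) (x (u i)) :=
    (comm _ _ (adj i v h)).symm
  have power_quotient_mem (v : V) : ∃ m : ℕ, ∀ a : ℤ,
      x (u (lab v)) ^ a * (x v ^ a)⁻¹ ∈ wordBall T (m * a.natAbs) :=
    exists_zpow_mul_inv_mem_wordBall_of_reachable (x := fun w : {w | lab w = lab v} => x w)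
      (fun w w' h => comm w w' h)
      (fun w w' _ => hT (mul_inv_mem_ker_of_label_eq hΦ (w.2.trans w'.2.symm)))
      ((connected (lab v)).preconnected ⟨u (lab v), hu _⟩ ⟨v, rfl⟩)
  choose m hm using power_quotient_mem
  obtain ⟨K, hK⟩ := (Set.finite_range m).bddAbove
  have hy : Pairwise fun i j => Commute (x (u i)) (x (u j)) :=
    fun i j hij => comm_of_label_ne ((hu i).trans_ne hij)
  refine ⟨K, fun N => distortion_ker_le_of_conj_mem gen hΦ hy fun v q hq => ?_⟩
  have comm_of_ne (j : ι) (hj : j ≠ lab v) : Commute (x v * (x (u (lab v)))⁻¹) (x (u j)) :=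
    (comm_of_label_ne hj.symm).mul_left (comm_of_label_ne ((hu _).trans_ne hj.symm)).inv_left
  rw [piZPowersHom_conj_eq_zpow_conj hy comm_of_ne, zpow_conj_mul_inv_eq]
  refine wordBall_mono T ?_ (mul_mem_wordBall_add (hm v _) (inv_mem_wordBall (hm v _)))
  have hq_succ : ((q (lab v)).toAdd + 1).natAbs ≤ N + 1 :=
    (Int.natAbs_add_le _ _).trans (Nat.succ_le_succ (hq _))
  calc m v * (q (lab v)).toAdd.natAbs + m v * ((q (lab v)).toAdd + 1).natAbs
      ≤ K * N + K * (N + 1) := by gcongr; exacts [hK ⟨v, rfl⟩, hq _, hK ⟨v, rfl⟩]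
    _ = K * (2 * N + 1) := by ring

/-- Here `G` is any quotient of the right-angled Artin group of `Γ` through which `Φ` factors, and
`x v` is the image of the generator `v`. -/
theorem stmt17_general
    (comm : ∀ v w, Γ.Adj v w → Commute (x v) (x w)) (gen : Subgroup.closure (Set.range x) = ⊤)
    (hΦ : ∀ v, Φ (x v) = Pi.mulSingle (lab v) (Multiplicative.ofAdd 1))
    (hT : Φ.ker ≤ Subgroup.closure T) :
    (IsStrongLabeling Γ lab →
      Dominated (distortion (Set.range x) T Φ.ker) (fun n => n ^ 2)) ∧
    (IsSpecialLabeling Γ lab → FEquiv (distortion (Set.range x) T Φ.ker) (fun n => n)) := by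
  refine ⟨fun strong => ?_, fun special => ⟨?_, id_dominated _⟩⟩
  · obtain ⟨K, hK⟩ := strong.exists_distortion_ker_le_mul comm gen hΦ hT
    refine dominated_of_le_mul_add_mul (a := 2 * K) (c := K) fun N => (hK N).trans_eq ?_
    ring
  · obtain ⟨K, hK⟩ := special.exists_distortion_ker_le_mul comm gen hΦ hT
    refine dominated_of_le_mul_add_mul (a := K) (c := 0) fun N => (hK N).trans_eq ?_
    ring

end Labeling

section RAAG

variable {V : Type*} (Γ : SimpleGraph V)

theorem commute_raagGen_of_adj (u v : V) (h : Γ.Adj u v) :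
    Commute (raagGen Γ u) (raagGen Γ v) := by
  have relator_eq_one : raagGen Γ u * raagGen Γ v * (raagGen Γ u)⁻¹ * (raagGen Γ v)⁻¹ = 1 :=
    PresentedGroup.one_of_mem ⟨u, v, h, rfl⟩
  rwa [mul_inv_eq_one, mul_inv_eq_iff_eq_mul] at relator_eq_one

theorem closure_range_raagGen : Subgroup.closure (Set.range (raagGen Γ)) = ⊤ :=
  PresentedGroup.closure_range_of _

end RAAG

theorem stmt17 {V : Type*} [Fintype V] (Γ : SimpleGraph V) (d : ℕ)
    (lab : V → Fin d) (hlab : Function.Surjective lab)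
    (Φ : RAAG Γ →* (Fin d → Multiplicative ℤ))
    (hΦ : ∀ v : V, Φ (raagGen Γ v) = Pi.mulSingle (lab v) (Multiplicative.ofAdd 1))
    -- `H_Φ` is strong: each basis subgraph is connected and strongly dominating
    (hstrong : ∀ i : Fin d, (Γ.induce {v : V | lab v = i}).Connected ∧
      ∃ u : V, lab u = i ∧ ∀ v : V, lab v ≠ i → Γ.Adj u v) :
    -- the distortion of `H_Φ` in `A_Γ` is at most quadratic
    (∀ T : Set (RAAG Γ), T.Finite → T ⊆ (Φ.ker : Set (RAAG Γ)) →
      Subgroup.closure T = Φ.ker →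
      Dominated (distortion (Set.range (raagGen Γ)) T Φ.ker) (fun n => n ^ 2)) ∧
    -- if moreover `H_Φ` is special, the distortion of `H_Φ` in `A_Γ` is linear
    ((∀ i : Fin d, ∃ u : V, lab u = i ∧ ∀ v : V, v ≠ u → Γ.Adj u v) →
      ∀ T : Set (RAAG Γ), T.Finite → T ⊆ (Φ.ker : Set (RAAG Γ)) →
        Subgroup.closure T = Φ.ker →
        FEquiv (distortion (Set.range (raagGen Γ)) T Φ.ker) (fun n => n)) := by
  have general {T : Set (RAAG Γ)} (hT : Subgroup.closure T = Φ.ker) :=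
    stmt17_general (commute_raagGen_of_adj Γ) (closure_range_raagGen Γ) hΦ hT.ge
  exact ⟨fun _ _ _ hT => (general hT).1 hstrong, fun special _ _ _ hT => (general hT).2 special⟩
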